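/- arXiv:2011.04274 — 2 statements merged into one kernel-verified Lean document; each statement's English description precedes it below -/
import Mathlib

section
/- Let θ : ℝ → ℝ be convex with left-hand derivative ∂_−θ, let I ⊂ ℝ, let T : I → ℝ be nondecreasing, let [a,b] be the closure of the convex hull of T(I), and fix y₀ ∈ (a,b). Define S̲(y) := inf{ x ∈ I : T(x) ≥ y } for y ∈ (a,b) (which is real-valued) and ψ̲(y) := ∫_{y₀}^y ∂_−θ(z − S̲(z)) dz for y ∈ (a,b). Then ψ̲ is continuous on (a,b), and for every x ∈ I and every y' ∈ [T(x−), T(x)] ∩ (a,b) one has −ψ̲(y') + θ(y' − x) = inf_{y ∈ (a,b)} [ −ψ̲(y) + θ(y − x) ], where T(x−) denotes the left limit of T at x. -/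
open Set Classical

noncomputable section

/-- The left-hand derivative of a (convex) function `θ : ℝ → ℝ`:
the supremum of the slopes from the left. -/
def leftDeriv (θ : ℝ → ℝ) (z : ℝ) : ℝ :=
  sSup ((fun w => (θ z - θ w) / (z - w)) '' Iio z)

/-- `S̲(y) = inf {x ∈ I : T x ≥ y}`. -/
def Slow (T : ℝ → ℝ) (I : Set ℝ) (y : ℝ) : ℝ := sInf {x | x ∈ I ∧ y ≤ T x}

/-- `ψ̲(y) = ∫_{y₀}^y ∂₋θ(z - S̲(z)) dz`. -/
def psiLow (θ T : ℝ → ℝ) (I : Set ℝ) (y₀ y : ℝ) : ℝ :=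
  ∫ z in y₀..y, leftDeriv θ (z - Slow T I z)

/-- The left limit `T(x−)` of `T` at `x` along `I` (with the convention `T(x−) = T x` if
there are no points of `I` to the left of `x`). -/

def leftLimOn (T : ℝ → ℝ) (I : Set ℝ) (x : ℝ) : ℝ :=
  if (I ∩ Iio x).Nonempty then sSup (T '' (I ∩ Iio x)) else T x

/-!
Let `x ∈ I` and `y' ∈ [T(x−), T x]`. Then `S̲ z ≤ x` for `z ≤ y'`, and `x ≤ S̲ z` for `z > y'`.
Since `∂₋θ` is monotone, `∂₋θ(z - S̲ z)` is therefore at least `∂₋θ(z - x)` to the left of `y'` and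
at most `∂₋θ(z - x)` to the right of it. Integrating this comparison from `y'` to `y` gives
`ψ̲ y - ψ̲ y' ≤ θ(y - x) - θ(y' - x)` on both sides of `y'`, so `y'` is a minimizer.
-/

open MeasureTheory

section IntervalIntegral

variable {μ : Measure ℝ} {c d : ℝ}

lemma intervalIntegral_mono_of_le_Ioo_of_ge_Ioo [NullSingletonClass μ] {f g : ℝ → ℝ}
    (hf : IntervalIntegrable f μ c d) (hg : IntervalIntegrable g μ c d)
    (hle : ∀ z ∈ Ioo c d, f z ≤ g z) (hge : ∀ z ∈ Ioo d c, g z ≤ f z) :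
    ∫ z in c..d, f z ∂μ ≤ ∫ z in c..d, g z ∂μ := by
  rcases le_total c d with hcd | hdc
  · exact intervalIntegral.integral_mono_on_of_le_Ioo hcd hf hg hle
  · rw [intervalIntegral.integral_symm d c, intervalIntegral.integral_symm d c]
    exact neg_le_neg (intervalIntegral.integral_mono_on_of_le_Ioo hdc hg.symm hf.symm hge)

lemma continuousOn_intervalIntegral_of_isOpen {E : Type*} [NormedAddCommGroup E] [NormedSpace ℝ E]
    [NullSingletonClass μ] {f : ℝ → E} {J : Set ℝ} {y₀ : ℝ} (hJ : IsOpen J) (hy₀ : y₀ ∈ J)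
    (hf : ∀ u ∈ J, ∀ v ∈ J, IntervalIntegrable f μ u v) :
    ContinuousOn (fun y ↦ ∫ z in y₀..y, f z ∂μ) J := by
  intro y hy
  obtain ⟨u, v, huv, hnhds, hsub⟩ := exists_Icc_mem_subset_of_mem_nhds (hJ.mem_nhds hy)
  have hle : u ≤ v := huv.1.trans huv.2
  have hu : u ∈ J := hsub (left_mem_Icc.2 hle)
  have hv : v ∈ J := hsub (right_mem_Icc.2 hle)
  have hcont : ContinuousOn (fun y ↦ (∫ z in y₀..u, f z ∂μ) + ∫ z in u..y, f z ∂μ) (Icc u v) := by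
    rw [← uIcc_of_le hle]
    exact continuousOn_const.add
      (intervalIntegral.continuousOn_primitive_interval' (hf u hu v hv) left_mem_uIcc)
  have hadd : EqOn (fun y ↦ ∫ z in y₀..y, f z ∂μ)
      (fun y ↦ (∫ z in y₀..u, f z ∂μ) + ∫ z in u..y, f z ∂μ) (Icc u v) := fun w hw ↦
    (intervalIntegral.integral_add_adjacent_intervals (hf y₀ hy₀ u hu) (hf u hu w (hsub hw))).symm
  exact ((hcont.congr hadd).continuousAt hnhds).continuousWithinAt

lemma intervalIntegrable_comp_sub_of_monotone [IsLocallyFiniteMeasure μ] {g S : ℝ → ℝ}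
    (hg : Monotone g) (hS : MonotoneOn S (uIcc c d)) :
    IntervalIntegrable (fun z ↦ g (z - S z)) μ c d := by
  have : IsFiniteMeasure (μ.restrict (uIcc c d)) :=
    isFiniteMeasure_restrict.2 isCompact_uIcc.measure_lt_top.ne
  have hmin : min c d ∈ uIcc c d := left_mem_Icc.2 min_le_max
  have hmax : max c d ∈ uIcc c d := right_mem_Icc.2 min_le_max
  have hmeas : AEMeasurable (fun z ↦ g (z - S z)) (μ.restrict (uIcc c d)) :=
    hg.measurable.comp_aemeasurable
      (aemeasurable_id.sub (aemeasurable_restrict_of_monotoneOn measurableSet_uIcc hS))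
  have hbounds : ∀ z ∈ uIcc c d,
      g (z - S z) ∈ Icc (g (min c d - S (max c d))) (g (max c d - S (min c d))) := fun z hz ↦
    ⟨hg (sub_le_sub hz.1 (hS hz hmax hz.2)), hg (sub_le_sub hz.2 (hS hmin hz hz.1))⟩
  have hint : IntegrableOn (fun z ↦ g (z - S z)) (uIcc c d) μ :=
    Integrable.of_mem_Icc _ _ hmeas (ae_restrict_of_forall_mem measurableSet_uIcc hbounds)
  exact hint.intervalIntegrable

end IntervalIntegral

section LeftDeriv

variable {θ : ℝ → ℝ} {c d : ℝ}

lemma integral_derivWithin_Iio_of_convexOn {s : Set ℝ} (hθ : ConvexOn ℝ s θ)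
    (hcd : uIcc c d ⊆ interior s) :
    ∫ z in c..d, derivWithin θ (Iio z) z = θ d - θ c := by
  obtain ⟨K, hK⟩ :=
    (hθ.locallyLipschitzOn_interior.mono hcd).exists_lipschitzOnWith_of_compact isCompact_uIcc
  have hac : AbsolutelyContinuousOnInterval θ c d := hK.absolutelyContinuousOnInterval
  rw [← hac.integral_deriv_eq_sub]
  apply intervalIntegral.integral_congr_ae
  filter_upwards [hac.ae_differentiableAt] with z hdiff hz
  exact (hdiff (uIoc_subset_uIcc hz)).derivWithin (uniqueDiffWithinAt_Iio z)

lemma leftDeriv_eq_derivWithin_Iio (hθ : ConvexOn ℝ univ θ) (z : ℝ) :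
    leftDeriv θ z = derivWithin θ (Iio z) z := by
  have hslope : slope θ z = fun w ↦ (θ z - θ w) / (z - w) := by
    funext w
    rw [slope_comm, slope_def_field]
  rw [hθ.leftDeriv_eq_sSup_slope_of_mem_interior (by simp only [interior_univ, mem_univ]), hslope]
  simp only [mem_univ, true_and]
  rfl

lemma monotone_leftDeriv (hθ : ConvexOn ℝ univ θ) : Monotone (leftDeriv θ) := by
  rw [funext (leftDeriv_eq_derivWithin_Iio hθ), ← monotoneOn_univ, ← interior_univ]
  exact hθ.monotoneOn_leftDeriv

lemma integral_leftDeriv_sub_const (hθ : ConvexOn ℝ univ θ) (c d x : ℝ) :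
    ∫ z in c..d, leftDeriv θ (z - x) = θ (d - x) - θ (c - x) := by
  rw [intervalIntegral.integral_comp_sub_right (leftDeriv θ),
    funext (leftDeriv_eq_derivWithin_Iio hθ)]
  exact integral_derivWithin_Iio_of_convexOn hθ (by simp only [interior_univ, subset_univ])

lemma integral_leftDeriv_sub_le {S : ℝ → ℝ} {x : ℝ} (hθ : ConvexOn ℝ univ θ)
    (hS : MonotoneOn S (uIcc c d)) (hge : ∀ z ∈ Ioo c d, x ≤ S z) (hle : ∀ z ∈ Ioo d c, S z ≤ x) :
    ∫ z in c..d, leftDeriv θ (z - S z) ≤ θ (d - x) - θ (c - x) := by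
  have hmono : Monotone (leftDeriv θ) := monotone_leftDeriv hθ
  rw [← integral_leftDeriv_sub_const hθ]
  exact intervalIntegral_mono_of_le_Ioo_of_ge_Ioo
    (intervalIntegrable_comp_sub_of_monotone hmono hS)
    (intervalIntegrable_comp_sub_of_monotone hmono monotoneOn_const)
    (fun z hz ↦ hmono (sub_le_sub_left (hge z hz) z))
    (fun z hz ↦ hmono (sub_le_sub_left (hle z hz) z))

end LeftDeriv

section ClosedConvexHull

variable {s : Set ℝ} {y : ℝ}

lemma exists_mem_lt_of_mem_interior_closure_convexHull
    (hy : y ∈ interior (closure (convexHull ℝ s))) : ∃ u ∈ s, u < y := by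
  by_contra! hs
  have hsub : closure (convexHull ℝ s) ⊆ Ici y :=
    closure_minimal (convexHull_min hs (convex_Ici y)) isClosed_Ici
  have hmem : y ∈ interior (Ici y) := interior_mono hsub hy
  rw [interior_Ici] at hmem
  exact lt_irrefl y hmem

lemma exists_mem_gt_of_mem_interior_closure_convexHull
    (hy : y ∈ interior (closure (convexHull ℝ s))) : ∃ u ∈ s, y < u := by
  by_contra! hs
  have hsub : closure (convexHull ℝ s) ⊆ Iic y :=
    closure_minimal (convexHull_min hs (convex_Iic y)) isClosed_Iic
  have hmem : y ∈ interior (Iic y) := interior_mono hsub hy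
  rw [interior_Iic] at hmem
  exact lt_irrefl y hmem

end ClosedConvexHull

section GeneralizedInverse

/-- The open interval `(a, b)` spanned by the values of `T` on `I`. It is encoded as the interior of
the closed convex hull of `T(I)`, so that infinite endpoints are allowed. -/
def rangeInterval (T : ℝ → ℝ) (I : Set ℝ) : Set ℝ := interior (closure (convexHull ℝ (T '' I)))

variable {T : ℝ → ℝ} {I : Set ℝ} {x y : ℝ}

lemma isOpen_rangeInterval : IsOpen (rangeInterval T I) := isOpen_interior

lemma ordConnected_rangeInterval : (rangeInterval T I).OrdConnected :=
  (convex_convexHull ℝ (T '' I)).closure.interior.ordConnected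

lemma nonempty_setOf_le_of_mem_rangeInterval (hy : y ∈ rangeInterval T I) :
    {x | x ∈ I ∧ y ≤ T x}.Nonempty := by
  obtain ⟨_, ⟨v, hv, rfl⟩, hyv⟩ := exists_mem_gt_of_mem_interior_closure_convexHull hy
  exact ⟨v, hv, hyv.le⟩

lemma bddBelow_setOf_le_of_mem_rangeInterval (hT : MonotoneOn T I) (hy : y ∈ rangeInterval T I) :
    BddBelow {x | x ∈ I ∧ y ≤ T x} := by
  obtain ⟨_, ⟨u, hu, rfl⟩, huy⟩ := exists_mem_lt_of_mem_interior_closure_convexHull hy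
  exact ⟨u, fun w hw ↦ (hT.reflect_lt hu hw.1 (huy.trans_le hw.2)).le⟩

lemma monotoneOn_slow (hT : MonotoneOn T I) : MonotoneOn (Slow T I) (rangeInterval T I) :=
  fun _ hy _ hz hyz ↦ csInf_le_csInf (bddBelow_setOf_le_of_mem_rangeInterval hT hy)
    (nonempty_setOf_le_of_mem_rangeInterval hz) fun _ hw ↦ ⟨hw.1, hyz.trans hw.2⟩

lemma slow_le (hT : MonotoneOn T I) (hy : y ∈ rangeInterval T I) (hx : x ∈ I) (hyx : y ≤ T x) :
    Slow T I y ≤ x :=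
  csInf_le (bddBelow_setOf_le_of_mem_rangeInterval hT hy) ⟨hx, hyx⟩

lemma le_leftLimOn {w : ℝ} (hT : MonotoneOn T I) (hw : w ∈ I) (hx : x ∈ I) (hwx : w < x) :
    T w ≤ leftLimOn T I x := by
  rw [leftLimOn, if_pos ⟨w, hw, hwx⟩]
  have hbdd : BddAbove (T '' (I ∩ Iio x)) :=
    ⟨T x, forall_mem_image.2 fun v hv ↦ hT hv.1 hx (mem_Iio.1 hv.2).le⟩
  exact le_csSup hbdd (mem_image_of_mem T ⟨hw, hwx⟩)

lemma le_slow (hT : MonotoneOn T I) (hy : y ∈ rangeInterval T I) (hx : x ∈ I)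
    (hxy : leftLimOn T I x < y) : x ≤ Slow T I y :=
  le_csInf (nonempty_setOf_le_of_mem_rangeInterval hy) fun _ hw ↦
    not_lt.1 fun hwx ↦ (hxy.trans_le hw.2).not_ge (le_leftLimOn hT hw.1 hx hwx)

end GeneralizedInverse

section Potential

variable {θ T : ℝ → ℝ} {I : Set ℝ} {x y y' y₀ : ℝ}

lemma intervalIntegrable_leftDeriv_sub_slow (hθ : ConvexOn ℝ univ θ) (hT : MonotoneOn T I)
    (hy : y ∈ rangeInterval T I) (hy' : y' ∈ rangeInterval T I) :
    IntervalIntegrable (fun z ↦ leftDeriv θ (z - Slow T I z)) volume y y' :=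
  intervalIntegrable_comp_sub_of_monotone (monotone_leftDeriv hθ)
    ((monotoneOn_slow hT).mono (ordConnected_rangeInterval.uIcc_subset hy hy'))

lemma continuousOn_psiLow (hθ : ConvexOn ℝ univ θ) (hT : MonotoneOn T I)
    (hy₀ : y₀ ∈ rangeInterval T I) : ContinuousOn (psiLow θ T I y₀) (rangeInterval T I) :=
  continuousOn_intervalIntegral_of_isOpen isOpen_rangeInterval hy₀ fun _ hu _ hv ↦
    intervalIntegrable_leftDeriv_sub_slow hθ hT hu hv

lemma psiLow_sub_psiLow_le (hθ : ConvexOn ℝ univ θ) (hT : MonotoneOn T I)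
    (hy₀ : y₀ ∈ rangeInterval T I) (hx : x ∈ I) (hy'x : y' ∈ Icc (leftLimOn T I x) (T x))
    (hy' : y' ∈ rangeInterval T I) (hy : y ∈ rangeInterval T I) :
    psiLow θ T I y₀ y - psiLow θ T I y₀ y' ≤ θ (y - x) - θ (y' - x) := by
  have hsub : uIcc y' y ⊆ rangeInterval T I := ordConnected_rangeInterval.uIcc_subset hy' hy
  have hright : ∀ z ∈ Ioo y' y, x ≤ Slow T I z := fun z hz ↦
    le_slow hT (hsub (Icc_subset_uIcc (Ioo_subset_Icc_self hz))) hx (hy'x.1.trans_lt hz.1)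
  have hleft : ∀ z ∈ Ioo y y', Slow T I z ≤ x := fun z hz ↦
    slow_le hT (hsub (Icc_subset_uIcc' (Ioo_subset_Icc_self hz))) hx (hz.2.le.trans hy'x.2)
  calc psiLow θ T I y₀ y - psiLow θ T I y₀ y'
      = ∫ z in y'..y, leftDeriv θ (z - Slow T I z) :=
        intervalIntegral.integral_interval_sub_left
          (intervalIntegrable_leftDeriv_sub_slow hθ hT hy₀ hy)
          (intervalIntegrable_leftDeriv_sub_slow hθ hT hy₀ hy')
    _ ≤ θ (y - x) - θ (y' - x) :=
        integral_leftDeriv_sub_le hθ ((monotoneOn_slow hT).mono hsub) hright hleft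

end Potential

theorem statement16_general (θ : ℝ → ℝ) (hθ : ConvexOn ℝ univ θ) (I : Set ℝ) (T : ℝ → ℝ)
    (hT : MonotoneOn T I) (y₀ : ℝ) (hy₀ : y₀ ∈ rangeInterval T I) :
    (∀ y ∈ rangeInterval T I,
      {x | x ∈ I ∧ y ≤ T x}.Nonempty ∧ BddBelow {x | x ∈ I ∧ y ≤ T x}) ∧
    ContinuousOn (psiLow θ T I y₀) (rangeInterval T I) ∧
    ∀ x ∈ I, ∀ y' ∈ Icc (leftLimOn T I x) (T x) ∩ rangeInterval T I,
      -psiLow θ T I y₀ y' + θ (y' - x)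
        = sInf ((fun y => -psiLow θ T I y₀ y + θ (y - x)) '' rangeInterval T I) := by
  refine ⟨fun y hy ↦ ⟨nonempty_setOf_le_of_mem_rangeInterval hy,
    bddBelow_setOf_le_of_mem_rangeInterval hT hy⟩, continuousOn_psiLow hθ hT hy₀, ?_⟩
  rintro x hx y' ⟨hy'x, hy'⟩
  have hmin : ∀ y ∈ rangeInterval T I,
      -psiLow θ T I y₀ y' + θ (y' - x) ≤ -psiLow θ T I y₀ y + θ (y - x) := fun y hy ↦ by
    linarith [psiLow_sub_psiLow_le hθ hT hy₀ hx hy'x hy' hy]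
  have hleast : IsLeast ((fun y => -psiLow θ T I y₀ y + θ (y - x)) '' rangeInterval T I)
      (-psiLow θ T I y₀ y' + θ (y' - x)) := ⟨⟨y', hy', rfl⟩, forall_mem_image.2 hmin⟩
  exact hleast.csInf_eq.symm

/-- Lemma `lem:dual optimizers` (a). -/
theorem statement16 (θ : ℝ → ℝ) (hθ : ConvexOn ℝ Set.univ θ) (I : Set ℝ) (T : ℝ → ℝ)
    (hT : MonotoneOn T I) (a b : ℝ) (hab : closure (convexHull ℝ (T '' I)) = Icc a b)
    (y₀ : ℝ) (hy₀ : y₀ ∈ Ioo a b) :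
    (∀ y ∈ Ioo a b, {x | x ∈ I ∧ y ≤ T x}.Nonempty ∧ BddBelow {x | x ∈ I ∧ y ≤ T x}) ∧
    ContinuousOn (psiLow θ T I y₀) (Ioo a b) ∧
    ∀ x ∈ I, ∀ y' ∈ Icc (leftLimOn T I x) (T x) ∩ Ioo a b,
      -psiLow θ T I y₀ y' + θ (y' - x)
        = sInf ((fun y => -psiLow θ T I y₀ y + θ (y - x)) '' Ioo a b) := by
  have hJ : rangeInterval T I = Ioo a b := by rw [rangeInterval, hab, interior_Icc]
  exact hJ ▸ statement16_general θ hθ I T hT y₀ (hJ ▸ hy₀)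
end
end

section
/- Let μ, ν ∈ 𝒫_1(ℝ), let θ : ℝ → ℝ be convex, and suppose there exist f ∈ L¹(μ) and g ∈ L¹(ν) with |θ(y − x)| ≤ f(x) + g(y) for all x, y ∈ ℝ. Let π^a ∈ Π(μ,ν) be the anticomonotone coupling, i.e. the pushforward of Lebesgue measure on (0,1) under u ↦ (F_μ^{-1}(u), F_ν^{-1}(1 − u)). Then ∫ θ(y − x) π^a(dx,dy) = sup_{π ∈ Π(μ,ν)} ∫ θ(y − x) π(dx,dy). -/
open MeasureTheory Set Filter
open scoped ENNReal NNReal Topology RealInnerProductSpace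

noncomputable section

namespace WOT

/-- The set of couplings of `μ` and `ν`. -/
def Couplings {X Y : Type*} [MeasurableSpace X] [MeasurableSpace Y]
    (μ : Measure X) (ν : Measure Y) : Set (Measure (X × Y)) :=
  {π | π.map Prod.fst = μ ∧ π.map Prod.snd = ν}

/-- `K` is a disintegration of `π` with respect to its first marginal `μ`. -/
def IsDisint {X Y : Type*} [MeasurableSpace X] [MeasurableSpace Y]
    (π : Measure (X × Y)) (μ : Measure X) (K : X → Measure Y) : Prop :=
  Measurable K ∧ (∀ x, IsProbabilityMeasure (K x)) ∧
    ∀ s : Set (X × Y), MeasurableSet s → π s = ∫⁻ x, K x (Prod.mk x ⁻¹' s) ∂μ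

/-- The intensity `I(Q)` of a measure on measures. -/
def intensity {Y : Type*} [MeasurableSpace Y] (Q : Measure (Measure Y)) : Measure Y :=
  Q.join

/-- The intensity map `Î`. -/
def intensityHat {X Y : Type*} [MeasurableSpace X] [MeasurableSpace Y]
    (P : Measure (X × Measure Y)) : Measure (X × Y) :=
  P.bind fun xp => (Measure.dirac xp.1).prod xp.2

/-- `Λ(μ,ν)`, the set of probability measures on `X × 𝒫(Y)` whose intensity is a coupling. -/
def Lambda {X Y : Type*} [MeasurableSpace X] [MeasurableSpace Y]
    (μ : Measure X) (ν : Measure Y) : Set (Measure (X × Measure Y)) :=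
  {P | IsProbabilityMeasure P ∧ (∀ᵐ xp ∂P, IsProbabilityMeasure xp.2) ∧
    intensityHat P ∈ Couplings μ ν}

/-- Finite `r`-th moment. -/
def FinMom {X : Type*} [MeasurableSpace X] [PseudoMetricSpace X]
    (r : ℝ) (x₀ : X) (μ : Measure X) : Prop :=
  ∫⁻ x, ENNReal.ofReal (dist x x₀ ^ r) ∂μ < ⊤

/-- The growth class `Φ_r`. -/
def PhiR {X : Type*} [PseudoMetricSpace X] (r : ℝ) (x₀ : X) : Set (X → ℝ) :=
  {φ | Continuous φ ∧ ∃ K : ℝ, ∀ x, |φ x| ≤ K * (1 + dist x x₀ ^ r)}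

/-- The `r`-Wasserstein distance (valued in `ℝ≥0∞`). -/
def Wr {Y : Type*} [MeasurableSpace Y] [PseudoMetricSpace Y]
    (r : ℝ) (p q : Measure Y) : ℝ≥0∞ :=
  ⨅ π ∈ Couplings p q, (∫⁻ z : Y × Y, ENNReal.ofReal (dist z.1 z.2 ^ r) ∂π) ^ (1 / r)

/-- `𝒫_r(Y)`: probability measures with finite `r`-th moment. -/
def Pr {Y : Type*} [MeasurableSpace Y] [PseudoMetricSpace Y] (r : ℝ) (y₀ : Y) :
    Set (Measure Y) :=
  {p | IsProbabilityMeasure p ∧ FinMom r y₀ p}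

/-- `𝒫_r(𝒫_r(Y))`: probability measures on `𝒫_r(Y)` with finite `r`-th moment w.r.t. `𝒲_r`. -/
def PrP {Y : Type*} [MeasurableSpace Y] [PseudoMetricSpace Y] (r : ℝ) (y₀ : Y) :
    Set (Measure (Measure Y)) :=
  {Q | IsProbabilityMeasure Q ∧ (∀ᵐ p ∂Q, p ∈ Pr r y₀) ∧
    ∫⁻ p, Wr r p (Measure.dirac y₀) ^ r ∂Q < ⊤}

/-- The positive part of an extended real, valued in `ℝ≥0∞`. -/
def epos (e : EReal) : ℝ≥0∞ := if e = ⊤ then ⊤ else ENNReal.ofReal e.toReal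

/-- Extended-real integral: positive part minus negative part (with value `⊥` when
both parts are infinite, i.e. when the integral is not well-defined). -/
def eInt {X : Type*} [MeasurableSpace X] (f : X → EReal) (μ : Measure X) : EReal :=
  ((∫⁻ x, epos (f x) ∂μ : ℝ≥0∞) : EReal) - ((∫⁻ x, epos (-(f x)) ∂μ : ℝ≥0∞) : EReal)

/-- Extended-real integral with the opposite (`⊤`) convention for ill-defined integrals. -/
def eIntU {X : Type*} [MeasurableSpace X] (f : X → EReal) (μ : Measure X) : EReal :=
  -eInt (fun x => -(f x)) μ

/-- The extended-real integral is well-defined. -/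
def eIntWellDef {X : Type*} [MeasurableSpace X] (f : X → EReal) (μ : Measure X) : Prop :=
  (∫⁻ x, epos (f x) ∂μ ≠ ⊤) ∨ (∫⁻ x, epos (-(f x)) ∂μ ≠ ⊤)

/-- Convergence in the `r`-Wasserstein distance. -/
def WrTendsto {Y : Type*} [MeasurableSpace Y] [PseudoMetricSpace Y]
    (r : ℝ) (ps : ℕ → Measure Y) (p : Measure Y) : Prop :=
  Tendsto (fun n => Wr r (ps n) p) atTop (nhds 0)

/-- (Sequential) lower semicontinuity on `𝒫_r(Y)` w.r.t. `𝒲_r`. -/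
def LscWr1 {Y : Type*} [MeasurableSpace Y] [PseudoMetricSpace Y]
    (r : ℝ) (y₀ : Y) (G : Measure Y → EReal) : Prop :=
  ∀ (p : Measure Y) (ps : ℕ → Measure Y), p ∈ Pr r y₀ → (∀ n, ps n ∈ Pr r y₀) →
    WrTendsto r ps p → G p ≤ liminf (fun n => G (ps n)) atTop

/-- (Sequential) upper semicontinuity on `𝒫_r(Y)` w.r.t. `𝒲_r`. -/
def UscWr1 {Y : Type*} [MeasurableSpace Y] [PseudoMetricSpace Y]
    (r : ℝ) (y₀ : Y) (G : Measure Y → EReal) : Prop :=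
  ∀ (p : Measure Y) (ps : ℕ → Measure Y), p ∈ Pr r y₀ → (∀ n, ps n ∈ Pr r y₀) →
    WrTendsto r ps p → limsup (fun n => G (ps n)) atTop ≤ G p

/-- (Sequential) lower semicontinuity on `X × 𝒫_r(Y)` w.r.t. `d_X × 𝒲_r`. -/
def LscWr {X Y : Type*} [TopologicalSpace X] [MeasurableSpace Y] [PseudoMetricSpace Y]
    (r : ℝ) (y₀ : Y) (C : X × Measure Y → EReal) : Prop :=
  ∀ (x : X) (xs : ℕ → X) (p : Measure Y) (ps : ℕ → Measure Y),
    p ∈ Pr r y₀ → (∀ n, ps n ∈ Pr r y₀) → Tendsto xs atTop (nhds x) → WrTendsto r ps p →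
    C (x, p) ≤ liminf (fun n => C (xs n, ps n)) atTop

/-- (Sequential) continuity of a real-valued cost on `X × 𝒫_r(Y)` w.r.t. `d_X × 𝒲_r`. -/
def ContWr {X Y : Type*} [TopologicalSpace X] [MeasurableSpace Y] [PseudoMetricSpace Y]
    (r : ℝ) (y₀ : Y) (C : X × Measure Y → ℝ) : Prop :=
  ∀ (x : X) (xs : ℕ → X) (p : Measure Y) (ps : ℕ → Measure Y),
    p ∈ Pr r y₀ → (∀ n, ps n ∈ Pr r y₀) → Tendsto xs atTop (nhds x) → WrTendsto r ps p →
    Tendsto (fun n => C (xs n, ps n)) atTop (nhds (C (x, p)))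

/-- Convexity of an extended-real-valued function on a set of measures. -/
def EConvexOn {Y : Type*} [MeasurableSpace Y] (S : Set (Measure Y)) (G : Measure Y → EReal) :
    Prop :=
  ∀ p ∈ S, ∀ q ∈ S, ∀ t : ℝ≥0, t ≤ 1 →
    G ((t : ℝ≥0∞) • p + ((1 - t : ℝ≥0) : ℝ≥0∞) • q)
      ≤ ((t : ℝ) : EReal) * G p + (((1 - t : ℝ≥0) : ℝ) : EReal) * G q

/-- The lower semicontinuous convex envelope (on `𝒫_r(Y)` w.r.t. `𝒲_r`). -/
def cvxEnvWr {Y : Type*} [MeasurableSpace Y] [PseudoMetricSpace Y]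
    (r : ℝ) (y₀ : Y) (f : Measure Y → EReal) : Measure Y → EReal :=
  fun p => ⨆ G ∈ {G : Measure Y → EReal |
    LscWr1 r y₀ G ∧ EConvexOn (Pr r y₀) G ∧ ∀ q ∈ Pr r y₀, G q ≤ f q}, G p

/-- The cost `C̃(x,p) = inf {∫ C(x,q) Q(dq) : Q ∈ 𝒫_r(𝒫_r(Y)), I(Q) = p}`. -/
def tildeC {X Y : Type*} [MeasurableSpace X] [MeasurableSpace Y] [PseudoMetricSpace Y]
    (r : ℝ) (y₀ : Y) (C : X × Measure Y → EReal) : X × Measure Y → EReal :=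
  fun xp => ⨅ Q ∈ {Q | Q ∈ PrP r y₀ ∧ intensity Q = xp.2}, eInt (fun q => C (xp.1, q)) Q

/-- The barycenter of a measure on a normed space. -/
def bary {E : Type*} [NormedAddCommGroup E] [NormedSpace ℝ E] [MeasurableSpace E]
    (p : Measure E) : E :=
  ∫ y, y ∂p

/-- Convex order of measures. -/
def ConvexOrder {E : Type*} [NormedAddCommGroup E] [NormedSpace ℝ E] [MeasurableSpace E]
    (ν' ν : Measure E) : Prop :=
  ∀ θ : E → ℝ, ConvexOn ℝ Set.univ θ →
    eInt (fun y => ((θ y : ℝ) : EReal)) ν' ≤ eInt (fun y => ((θ y : ℝ) : EReal)) ν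

/-- The inf-convolution `R_C ψ`. -/
def RC {X Y : Type*} [MeasurableSpace Y] [PseudoMetricSpace Y]
    (r : ℝ) (y₀ : Y) (C : X × Measure Y → EReal) (ψ : Y → ℝ) : X → EReal :=
  fun x => ⨅ p ∈ Pr r y₀, (((-∫ y, ψ y ∂p : ℝ) : EReal) + C (x, p))

/-- `κ` is a regular conditional distribution of `Yv` given the sub-σ-algebra `m1`. -/
def IsRCD {Ω Y : Type*} [MeasurableSpace Y] (m1 : MeasurableSpace Ω)
    (mΩ : MeasurableSpace Ω) (P : @Measure Ω mΩ) (Yv : Ω → Y) (κ : Ω → Measure Y) : Prop :=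
  (∀ ω, IsProbabilityMeasure (κ ω)) ∧ Measurable[m1] κ ∧
    ∀ A : Set Y, MeasurableSet A → ∀ B : Set Ω, MeasurableSet[m1] B →
      P (B ∩ Yv ⁻¹' A) = ∫⁻ ω in B, κ ω A ∂P

end WOT

open WOT

/-- The cumulative distribution function of a measure on `ℝ`. -/
def cdf (μ : Measure ℝ) (x : ℝ) : ℝ := (μ (Iic x)).toReal

/-- The quantile (generalized inverse cdf) of a measure on `ℝ`. -/
def quantile (μ : Measure ℝ) (u : ℝ) : ℝ := sInf {x : ℝ | u ≤ cdf μ x}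

/-- The anticomonotone coupling of two measures on `ℝ`: the image of Lebesgue measure on
`(0,1)` under `u ↦ (F_μ⁻¹(u), F_ν⁻¹(1-u))`. -/
def anticomonotone (μ ν : Measure ℝ) : Measure (ℝ × ℝ) :=
  (volume.restrict (Ioo (0 : ℝ) 1)).map fun u => (quantile μ u, quantile ν (1 - u))

/-!
On `(0, 1)` the sets `{u | F_μ⁻¹(u) ∈ A}` and `{u | F_ν⁻¹(1 - u) ∈ B}` are nested whenever `A` is a
lower set and `B` is an upper set, so the anticomonotone coupling gives `A ×ˢ B` the mass
`min (μ A) (ν B)`, the largest possible. By the layer cake formula it therefore maximizes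
`∫ p(x) q(y) dπ` for `p` antitone and `q` monotone.

If `R` is the right derivative of `θ`, the mixed difference
`θ(y - x) - θ(y₀ - x) - (θ(y - x₀) - θ(y₀ - x₀)) = ∫ s in y₀..y, (R(s - x) - R(s - x₀))`
is a superposition of such products, because `x ↦ R(s - x)` is antitone. The other terms of the
mixed difference depend on one variable only, so their integrals are the same for all couplings.
They are integrable by the domination hypothesis.
-/

/-! ### Couplings -/

section Couplings

variable {X Y : Type*} [MeasurableSpace X] [MeasurableSpace Y] {μ : Measure X} {ν : Measure Y}
  {π ρ : Measure (X × Y)}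

lemma measurePreserving_fst_of_mem_couplings (hπ : π ∈ Couplings μ ν) :
    MeasurePreserving Prod.fst π μ :=
  ⟨measurable_fst, hπ.1⟩

lemma measurePreserving_snd_of_mem_couplings (hπ : π ∈ Couplings μ ν) :
    MeasurePreserving Prod.snd π ν :=
  ⟨measurable_snd, hπ.2⟩

lemma isProbabilityMeasure_of_mem_couplings [IsProbabilityMeasure μ] (hπ : π ∈ Couplings μ ν) :
    IsProbabilityMeasure π := by
  rwa [← Measure.isProbabilityMeasure_map_iff measurable_fst.aemeasurable, hπ.1]

lemma measure_prod_le_min_of_mem_couplings (hπ : π ∈ Couplings μ ν) {A : Set X} {B : Set Y}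
    (hA : MeasurableSet A) (hB : MeasurableSet B) : π (A ×ˢ B) ≤ min (μ A) (ν B) := by
  rw [← (measurePreserving_fst_of_mem_couplings hπ).measure_preimage hA.nullMeasurableSet,
    ← (measurePreserving_snd_of_mem_couplings hπ).measure_preimage hB.nullMeasurableSet]
  exact le_min (measure_mono fun z hz => hz.1) (measure_mono fun z hz => hz.2)

lemma measure_prod_add_measure_prod_compl (hπ : π ∈ Couplings μ ν) {A : Set X} {B : Set Y}
    (hA : MeasurableSet A) (hB : MeasurableSet B) : π (A ×ˢ B) + π (A ×ˢ Bᶜ) = μ A := by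
  rw [← (measurePreserving_fst_of_mem_couplings hπ).measure_preimage hA.nullMeasurableSet]
  exact measure_inter_add_sdiff (Prod.fst ⁻¹' A) (measurable_snd hB)

lemma measure_prod_add_measure_compl_prod (hπ : π ∈ Couplings μ ν) {A : Set X} {B : Set Y}
    (hA : MeasurableSet A) (hB : MeasurableSet B) : π (A ×ˢ B) + π (Aᶜ ×ˢ B) = ν B := by
  rw [← (measurePreserving_snd_of_mem_couplings hπ).measure_preimage hB.nullMeasurableSet,
    ← measure_inter_add_sdiff (Prod.snd ⁻¹' B) (measurable_fst hA), inter_comm (Prod.snd ⁻¹' B),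
    sdiff_eq, inter_comm (Prod.snd ⁻¹' B)]
  rfl

lemma measure_prod_compl_le_of_measure_prod_le [IsFiniteMeasure π] (hπ : π ∈ Couplings μ ν)
    (hρ : ρ ∈ Couplings μ ν) {A : Set X} {B : Set Y} (hA : MeasurableSet A) (hB : MeasurableSet B)
    (h : π (A ×ˢ B) ≤ ρ (A ×ˢ B)) : ρ (A ×ˢ Bᶜ) ≤ π (A ×ˢ Bᶜ) := by
  refine ENNReal.le_of_add_le_add_left (measure_ne_top π (A ×ˢ B)) ?_
  calc π (A ×ˢ B) + ρ (A ×ˢ Bᶜ) ≤ ρ (A ×ˢ B) + ρ (A ×ˢ Bᶜ) := by gcongr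
    _ = π (A ×ˢ B) + π (A ×ˢ Bᶜ) := by
      rw [measure_prod_add_measure_prod_compl hρ hA hB,
        measure_prod_add_measure_prod_compl hπ hA hB]

lemma measure_compl_prod_le_of_measure_prod_le [IsFiniteMeasure π] (hπ : π ∈ Couplings μ ν)
    (hρ : ρ ∈ Couplings μ ν) {A : Set X} {B : Set Y} (hA : MeasurableSet A) (hB : MeasurableSet B)
    (h : π (A ×ˢ B) ≤ ρ (A ×ˢ B)) : ρ (Aᶜ ×ˢ B) ≤ π (Aᶜ ×ˢ B) := by
  refine ENNReal.le_of_add_le_add_left (measure_ne_top π (A ×ˢ B)) ?_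
  calc π (A ×ˢ B) + ρ (Aᶜ ×ˢ B) ≤ ρ (A ×ˢ B) + ρ (Aᶜ ×ˢ B) := by gcongr
    _ = π (A ×ˢ B) + π (Aᶜ ×ˢ B) := by
      rw [measure_prod_add_measure_compl_prod hρ hA hB,
        measure_prod_add_measure_compl_prod hπ hA hB]

lemma integrable_of_mem_couplings_of_abs_le_add (hπ : π ∈ Couplings μ ν) {c : X → Y → ℝ}
    (hc : Measurable (Function.uncurry c)) {f : X → ℝ} {g : Y → ℝ} (hf : Integrable f μ)
    (hg : Integrable g ν) (hdom : ∀ x y, |c x y| ≤ f x + g y) :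
    Integrable (fun z => c z.1 z.2) π :=
  (((measurePreserving_fst_of_mem_couplings hπ).integrable_comp_of_integrable hf).add
    ((measurePreserving_snd_of_mem_couplings hπ).integrable_comp_of_integrable hg)).mono'
    hc.aestronglyMeasurable (ae_of_all _ fun z => hdom z.1 z.2)

end Couplings

/-! ### Mixed differences -/

section MixedDifference

variable {X Y : Type*} [MeasurableSpace X] [MeasurableSpace Y] {μ : Measure X} {ν : Measure Y}
  {π : Measure (X × Y)} {c : X → Y → ℝ} {x₀ : X} {y₀ : Y}

/-- The second-order difference of `c` between the base point `(x₀, y₀)` and `(x, y)`. It differs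
from `c` by functions of one variable, so maximizing either of them over couplings is the same. -/
def mixedDifference (c : X → Y → ℝ) (x₀ : X) (y₀ : Y) (x : X) (y : Y) : ℝ :=
  c x y - c x y₀ - (c x₀ y - c x₀ y₀)

lemma integrable_mixedDifference [IsFiniteMeasure π] (hπ : π ∈ Couplings μ ν)
    (hc : Integrable (fun z => c z.1 z.2) π) (hcμ : Integrable (fun x => c x y₀) μ)
    (hcν : Integrable (c x₀) ν) :
    Integrable (fun z => mixedDifference c x₀ y₀ z.1 z.2) π :=
  (hc.sub ((measurePreserving_fst_of_mem_couplings hπ).integrable_comp_of_integrable hcμ)).sub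
    (((measurePreserving_snd_of_mem_couplings hπ).integrable_comp_of_integrable hcν).sub
      (integrable_const _))

lemma integral_mixedDifference [IsProbabilityMeasure π] (hπ : π ∈ Couplings μ ν)
    (hc : Integrable (fun z => c z.1 z.2) π) (hcμ : Integrable (fun x => c x y₀) μ)
    (hcν : Integrable (c x₀) ν) :
    ∫ z, mixedDifference c x₀ y₀ z.1 z.2 ∂π =
      ∫ z, c z.1 z.2 ∂π - ∫ x, c x y₀ ∂μ - (∫ y, c x₀ y ∂ν - c x₀ y₀) := by
  have hfst := measurePreserving_fst_of_mem_couplings hπ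
  have hsnd := measurePreserving_snd_of_mem_couplings hπ
  have hcfst : Integrable (fun z : X × Y => c z.1 y₀) π := hfst.integrable_comp_of_integrable hcμ
  have hcsnd : Integrable (fun z : X × Y => c x₀ z.2) π := hsnd.integrable_comp_of_integrable hcν
  have hμ : ∫ z, c z.1 y₀ ∂π = ∫ x, c x y₀ ∂μ := by
    rw [← hfst.map_eq] at hcμ ⊢
    exact (integral_map hfst.aemeasurable hcμ.aestronglyMeasurable).symm
  have hν : ∫ z, c x₀ z.2 ∂π = ∫ y, c x₀ y ∂ν := by
    rw [← hsnd.map_eq] at hcν ⊢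
    exact (integral_map hsnd.aemeasurable hcν.aestronglyMeasurable).symm
  have hleft : Integrable (fun z => c z.1 z.2 - c z.1 y₀) π := hc.sub hcfst
  have hright : Integrable (fun z : X × Y => c x₀ z.2 - c x₀ y₀) π :=
    hcsnd.sub (integrable_const _)
  simp only [mixedDifference]
  rw [integral_sub hleft hright, integral_sub hc hcfst,
    integral_sub hcsnd (integrable_const _), hμ, hν, integral_const, probReal_univ, one_smul]

end MixedDifference

/-! ### The quantile function -/

section Quantile

variable (μ ν : Measure ℝ) [IsProbabilityMeasure μ] [IsProbabilityMeasure ν]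

lemma cdf_eq_probabilityTheory_cdf : cdf μ = ProbabilityTheory.cdf μ :=
  funext fun x => (ProbabilityTheory.cdf_eq_real μ x).symm

lemma quantile_le_iff {u : ℝ} (hu : u ∈ Ioo 0 1) (a : ℝ) : quantile μ u ≤ a ↔ u ≤ cdf μ a := by
  rw [quantile, cdf_eq_probabilityTheory_cdf]
  set F := ProbabilityTheory.cdf μ
  have hne : {x | u ≤ F x}.Nonempty :=
    ((ProbabilityTheory.tendsto_cdf_atTop μ).eventually_const_le hu.2).exists
  have hbdd : BddBelow {x | u ≤ F x} := by
    obtain ⟨x, hx⟩ := ((ProbabilityTheory.tendsto_cdf_atBot μ).eventually_lt_const hu.1).exists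
    exact ⟨x, fun y hy => (F.mono.reflect_lt (hx.trans_le hy)).le⟩
  refine ⟨fun h => ?_, fun h => csInf_le hbdd h⟩
  have hright : Tendsto F (𝓝[>] a) (𝓝 (F a)) := (F.right_continuous a).mono Ioi_subset_Ici_self
  refine ge_of_tendsto hright ?_
  filter_upwards [self_mem_nhdsWithin] with x hx
  obtain ⟨y, hy, hyx⟩ := exists_lt_of_csInf_lt hne (h.trans_lt hx)
  exact hy.trans (F.mono hyx.le)

lemma monotoneOn_quantile : MonotoneOn (quantile μ) (Ioo 0 1) := fun _u hu _v hv huv =>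
  (quantile_le_iff μ hu _).2 (huv.trans ((quantile_le_iff μ hv _).1 le_rfl))

lemma aemeasurable_quantile : AEMeasurable (quantile μ) (volume.restrict (Ioo 0 1)) :=
  aemeasurable_restrict_of_monotoneOn measurableSet_Ioo (monotoneOn_quantile μ)

lemma map_quantile : (volume.restrict (Ioo 0 1)).map (quantile μ) = μ := by
  refine Measure.ext_of_Iic _ _ fun a => ?_
  have hlevel : quantile μ ⁻¹' Iic a ∩ Ioo 0 1 = Iic (cdf μ a) ∩ Ioo 0 1 := by
    ext u
    exact and_congr_left fun hu => quantile_le_iff μ hu a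
  calc (volume.restrict (Ioo 0 1)).map (quantile μ) (Iic a)
      = volume (Iic (cdf μ a) ∩ Ioo 0 1) := by
        rw [Measure.map_apply_of_aemeasurable (aemeasurable_quantile μ) measurableSet_Iic,
          Measure.restrict_apply' measurableSet_Ioo, hlevel]
    _ = volume (Ioc 0 1 ∩ Iic (cdf μ a)) := by
        rw [inter_comm]
        exact measure_congr (Ioo_ae_eq_Ioc.inter ae_eq_rfl)
    _ = ENNReal.ofReal (cdf μ a) := by
        rw [Ioc_inter_Iic, Real.volume_Ioc, sub_zero, cdf_eq_probabilityTheory_cdf,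
          min_eq_right (ProbabilityTheory.cdf_le_one μ a)]
    _ = μ (Iic a) := by rw [cdf_eq_probabilityTheory_cdf, ProbabilityTheory.ofReal_cdf]

lemma measurePreserving_one_sub_restrict_Ioo :
    MeasurePreserving (fun u : ℝ => 1 - u) (volume.restrict (Ioo 0 1))
      (volume.restrict (Ioo 0 1)) := by
  simpa using (Measure.measurePreserving_sub_left volume (1 : ℝ)).restrict_preimage
    (measurableSet_Ioo (a := 0) (b := 1))

lemma aemeasurable_quantile_one_sub :
    AEMeasurable (fun u => quantile μ (1 - u)) (volume.restrict (Ioo 0 1)) :=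
  (aemeasurable_quantile μ).comp_quasiMeasurePreserving
    measurePreserving_one_sub_restrict_Ioo.quasiMeasurePreserving

lemma map_quantile_one_sub :
    (volume.restrict (Ioo 0 1)).map (fun u => quantile μ (1 - u)) = μ := by
  have hreflect := measurePreserving_one_sub_restrict_Ioo
  have hmeas := aemeasurable_quantile μ
  rw [← hreflect.map_eq] at hmeas
  calc (volume.restrict (Ioo 0 1)).map (fun u => quantile μ (1 - u))
      = ((volume.restrict (Ioo 0 1)).map (fun u => 1 - u)).map (quantile μ) :=
        (AEMeasurable.map_map_of_aemeasurable hmeas hreflect.aemeasurable).symm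
    _ = μ := by rw [hreflect.map_eq, map_quantile]

lemma aemeasurable_quantile_prodMk_quantile_one_sub :
    AEMeasurable (fun u => (quantile μ u, quantile ν (1 - u))) (volume.restrict (Ioo 0 1)) :=
  (aemeasurable_quantile μ).prodMk (aemeasurable_quantile_one_sub ν)

lemma anticomonotone_mem_couplings : anticomonotone μ ν ∈ Couplings μ ν := by
  have hmeas := aemeasurable_quantile_prodMk_quantile_one_sub μ ν
  constructor
  · rw [anticomonotone, AEMeasurable.map_map_of_aemeasurable measurable_fst.aemeasurable hmeas]
    exact map_quantile μ
  · rw [anticomonotone, AEMeasurable.map_map_of_aemeasurable measurable_snd.aemeasurable hmeas]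
    exact map_quantile_one_sub ν

end Quantile

/-! ### Extremality on products of lower and upper sets -/

section Rectangles

variable {μ ν : Measure ℝ} [IsProbabilityMeasure μ] [IsProbabilityMeasure ν]
  {π : Measure (ℝ × ℝ)} {A B : Set ℝ}

lemma quantile_preimage_subset_or_subset (hA : IsLowerSet A) (hB : IsUpperSet B) :
    quantile μ ⁻¹' A ∩ Ioo 0 1 ⊆ (fun u => quantile ν (1 - u)) ⁻¹' B ∩ Ioo 0 1 ∨
      (fun u => quantile ν (1 - u)) ⁻¹' B ∩ Ioo 0 1 ⊆ quantile μ ⁻¹' A ∩ Ioo 0 1 := by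
  by_contra! h
  obtain ⟨⟨u, huA, huB⟩, v, hvB, hvA⟩ := And.imp not_subset.1 not_subset.1 h
  rcases le_total u v with huv | hvu
  · have hquantile : quantile ν (1 - v) ≤ quantile ν (1 - u) :=
      monotoneOn_quantile ν (Ioo.one_sub_mem hvB.2) (Ioo.one_sub_mem huA.2) (by linarith)
    exact huB ⟨hB hquantile hvB.1, huA.2⟩
  · exact hvA ⟨hA (monotoneOn_quantile μ hvB.2 huA.2 hvu) huA.1, hvB.2⟩

lemma anticomonotone_prod_of_isLowerSet_of_isUpperSet (hA : IsLowerSet A) (hB : IsUpperSet B) :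
    anticomonotone μ ν (A ×ˢ B) = min (μ A) (ν B) := by
  have hAmeas := hA.ordConnected.measurableSet
  have hBmeas := hB.ordConnected.measurableSet
  set U := quantile μ ⁻¹' A ∩ Ioo 0 1 with hU
  set V := (fun u => quantile ν (1 - u)) ⁻¹' B ∩ Ioo 0 1 with hV
  have hμA : μ A = volume U := by
    rw [hU, ← Measure.restrict_apply' measurableSet_Ioo,
      ← Measure.map_apply_of_aemeasurable (aemeasurable_quantile μ) hAmeas, map_quantile]
  have hνB : ν B = volume V := by
    rw [hV, ← Measure.restrict_apply' measurableSet_Ioo,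
      ← Measure.map_apply_of_aemeasurable (aemeasurable_quantile_one_sub ν) hBmeas,
      map_quantile_one_sub]
  have hAB : anticomonotone μ ν (A ×ˢ B) = volume (U ∩ V) := by
    rw [anticomonotone, Measure.map_apply_of_aemeasurable
      (aemeasurable_quantile_prodMk_quantile_one_sub μ ν) (hAmeas.prod hBmeas),
      Measure.restrict_apply' measurableSet_Ioo, hU, hV, ← inter_inter_distrib_right,
      mk_preimage_prod]
  rw [hAB, hμA, hνB]
  rcases quantile_preimage_subset_or_subset (μ := μ) (ν := ν) hA hB with h | h
  · rw [inter_eq_left.2 h, min_eq_left (measure_mono h)]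
  · rw [inter_eq_right.2 h, min_eq_right (measure_mono h)]

lemma measure_lower_prod_upper_le_anticomonotone (hπ : π ∈ Couplings μ ν) (hA : IsLowerSet A)
    (hB : IsUpperSet B) : π (A ×ˢ B) ≤ anticomonotone μ ν (A ×ˢ B) := by
  rw [anticomonotone_prod_of_isLowerSet_of_isUpperSet hA hB]
  exact measure_prod_le_min_of_mem_couplings hπ hA.ordConnected.measurableSet
    hB.ordConnected.measurableSet

lemma anticomonotone_lower_prod_lower_le_measure (hπ : π ∈ Couplings μ ν) (hA : IsLowerSet A)
    (hB : IsLowerSet B) : anticomonotone μ ν (A ×ˢ B) ≤ π (A ×ˢ B) := by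
  have := isProbabilityMeasure_of_mem_couplings hπ
  simpa only [compl_compl] using measure_prod_compl_le_of_measure_prod_le hπ
    (anticomonotone_mem_couplings μ ν) hA.ordConnected.measurableSet
    hB.compl.ordConnected.measurableSet (measure_lower_prod_upper_le_anticomonotone hπ hA hB.compl)

lemma anticomonotone_upper_prod_upper_le_measure (hπ : π ∈ Couplings μ ν) (hA : IsUpperSet A)
    (hB : IsUpperSet B) : anticomonotone μ ν (A ×ˢ B) ≤ π (A ×ˢ B) := by
  have := isProbabilityMeasure_of_mem_couplings hπ
  simpa only [compl_compl] using measure_compl_prod_le_of_measure_prod_le hπ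
    (anticomonotone_mem_couplings μ ν) hA.compl.ordConnected.measurableSet
    hB.ordConnected.measurableSet (measure_lower_prod_upper_le_anticomonotone hπ hA.compl hB)

lemma measure_upper_prod_lower_le_anticomonotone (hπ : π ∈ Couplings μ ν) (hA : IsUpperSet A)
    (hB : IsLowerSet B) : π (A ×ˢ B) ≤ anticomonotone μ ν (A ×ˢ B) := by
  have hρ := anticomonotone_mem_couplings μ ν
  have := isProbabilityMeasure_of_mem_couplings hρ
  simpa only [compl_compl] using measure_compl_prod_le_of_measure_prod_le hρ hπ
    hA.compl.ordConnected.measurableSet hB.ordConnected.measurableSet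
    (anticomonotone_lower_prod_lower_le_measure hπ hA.compl hB)

end Rectangles

/-! ### Integrals of products of monotone functions -/

section LayerCake

variable {Ω : Type*} [MeasurableSpace Ω] {π ρ : Measure Ω} {F G : Ω → ℝ}

lemma lintegral_ofReal_eq_lintegral_measure_lt (π : Measure Ω) (hF : Measurable F) :
    ∫⁻ ω, ENNReal.ofReal (F ω) ∂π = ∫⁻ t in Ioi 0, π {ω | t < F ω} := by
  calc ∫⁻ ω, ENNReal.ofReal (F ω) ∂π
      = ∫⁻ ω, ENNReal.ofReal (max (F ω) 0) ∂π := by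
        simp only [ENNReal.ofReal_max, ENNReal.ofReal_zero, max_eq_left zero_le]
    _ = ∫⁻ t in Ioi 0, π {ω | t < max (F ω) 0} :=
        lintegral_eq_lintegral_meas_lt π (ae_of_all _ fun ω => le_max_right _ _)
          (hF.max measurable_const).aemeasurable
    _ = ∫⁻ t in Ioi 0, π {ω | t < F ω} :=
        setLIntegral_congr_fun measurableSet_Ioi fun t (ht : 0 < t) => by
          simp only [lt_max_iff, ht.not_gt, or_false]

lemma lintegral_ofReal_le_of_measure_lt_le (hF : Measurable F)
    (h : ∀ a, π {ω | a < F ω} ≤ ρ {ω | a < F ω}) :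
    ∫⁻ ω, ENNReal.ofReal (F ω) ∂π ≤ ∫⁻ ω, ENNReal.ofReal (F ω) ∂ρ := by
  rw [lintegral_ofReal_eq_lintegral_measure_lt π hF, lintegral_ofReal_eq_lintegral_measure_lt ρ hF]
  exact lintegral_mono h

lemma lintegral_ofReal_mul_ofReal_le_of_measure_lt_inter_lt_le (hF : Measurable F)
    (hG : Measurable G)
    (h : ∀ a b, π ({ω | a < F ω} ∩ {ω | b < G ω}) ≤ ρ ({ω | a < F ω} ∩ {ω | b < G ω})) :
    ∫⁻ ω, ENNReal.ofReal (F ω) * ENNReal.ofReal (G ω) ∂π ≤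
      ∫⁻ ω, ENNReal.ofReal (F ω) * ENNReal.ofReal (G ω) ∂ρ := by
  have hdensity (κ : Measure Ω) : ∫⁻ ω, ENNReal.ofReal (F ω) * ENNReal.ofReal (G ω) ∂κ =
      ∫⁻ ω, ENNReal.ofReal (G ω) ∂κ.withDensity fun ω => ENNReal.ofReal (F ω) :=
    (lintegral_withDensity_eq_lintegral_mul κ hF.ennreal_ofReal hG.ennreal_ofReal).symm
  rw [hdensity π, hdensity ρ]
  refine lintegral_ofReal_le_of_measure_lt_le hG fun b => ?_
  have hGb : MeasurableSet {ω | b < G ω} := measurableSet_lt measurable_const hG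
  rw [withDensity_apply _ hGb, withDensity_apply _ hGb]
  refine lintegral_ofReal_le_of_measure_lt_le hF fun a => ?_
  rw [Measure.restrict_apply' hGb, Measure.restrict_apply' hGb]
  exact h a b

end LayerCake

lemma ofReal_mul_eq_add_mul_neg (a b : ℝ) :
    ENNReal.ofReal (a * b) = ENNReal.ofReal a * ENNReal.ofReal b +
      ENNReal.ofReal (-a) * ENNReal.ofReal (-b) := by
  rcases le_total 0 a with ha | ha
  · rw [ENNReal.ofReal_mul ha, ENNReal.ofReal_of_nonpos (neg_nonpos.2 ha), zero_mul, add_zero]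
  · rw [← neg_mul_neg, ENNReal.ofReal_mul (neg_nonneg.2 ha), ENNReal.ofReal_of_nonpos ha, zero_mul,
      zero_add]

lemma isLowerSet_setOf_lt_of_antitone {α β : Type*} [Preorder α] [Preorder β] {f : α → β}
    (hf : Antitone f) (b : β) : IsLowerSet {x | b < f x} :=
  fun _x _y hyx hx => hx.trans_le (hf hyx)

section MonotoneProducts

variable {μ ν : Measure ℝ} [IsProbabilityMeasure μ] [IsProbabilityMeasure ν]
  {π : Measure (ℝ × ℝ)} {p q : ℝ → ℝ}

lemma lintegral_ofReal_mul_le_lintegral_anticomonotone (hπ : π ∈ Couplings μ ν) (hp : Antitone p)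
    (hq : Monotone q) :
    ∫⁻ z, ENNReal.ofReal (p z.1 * q z.2) ∂π ≤
      ∫⁻ z, ENNReal.ofReal (p z.1 * q z.2) ∂anticomonotone μ ν := by
  have hpm : Measurable fun z : ℝ × ℝ => p z.1 := hp.measurable.comp measurable_fst
  have hqm : Measurable fun z : ℝ × ℝ => q z.2 := hq.measurable.comp measurable_snd
  simp only [ofReal_mul_eq_add_mul_neg]
  have hmeas : Measurable fun z : ℝ × ℝ => ENNReal.ofReal (p z.1) * ENNReal.ofReal (q z.2) :=
    hpm.ennreal_ofReal.mul hqm.ennreal_ofReal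
  rw [lintegral_add_left hmeas, lintegral_add_left hmeas]
  refine add_le_add ?_ ?_
  · exact lintegral_ofReal_mul_ofReal_le_of_measure_lt_inter_lt_le hpm hqm fun a b =>
      measure_lower_prod_upper_le_anticomonotone hπ (isLowerSet_setOf_lt_of_antitone hp a)
        ((isUpperSet_Ioi b).preimage hq)
  · exact lintegral_ofReal_mul_ofReal_le_of_measure_lt_inter_lt_le hpm.neg hqm.neg fun a b =>
      measure_upper_prod_lower_le_anticomonotone hπ ((isUpperSet_Ioi a).preimage hp.neg)
        (isLowerSet_setOf_lt_of_antitone hq.neg b)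

lemma lintegral_anticomonotone_ofReal_mul_le (hπ : π ∈ Couplings μ ν) (hp : Antitone p)
    (hq : Antitone q) :
    ∫⁻ z, ENNReal.ofReal (p z.1 * q z.2) ∂anticomonotone μ ν ≤
      ∫⁻ z, ENNReal.ofReal (p z.1 * q z.2) ∂π := by
  have hpm : Measurable fun z : ℝ × ℝ => p z.1 := hp.measurable.comp measurable_fst
  have hqm : Measurable fun z : ℝ × ℝ => q z.2 := hq.measurable.comp measurable_snd
  simp only [ofReal_mul_eq_add_mul_neg]
  have hmeas : Measurable fun z : ℝ × ℝ => ENNReal.ofReal (p z.1) * ENNReal.ofReal (q z.2) :=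
    hpm.ennreal_ofReal.mul hqm.ennreal_ofReal
  rw [lintegral_add_left hmeas, lintegral_add_left hmeas]
  refine add_le_add ?_ ?_
  · exact lintegral_ofReal_mul_ofReal_le_of_measure_lt_inter_lt_le hpm hqm fun a b =>
      anticomonotone_lower_prod_lower_le_measure hπ (isLowerSet_setOf_lt_of_antitone hp a)
        (isLowerSet_setOf_lt_of_antitone hq b)
  · exact lintegral_ofReal_mul_ofReal_le_of_measure_lt_inter_lt_le hpm.neg hqm.neg fun a b =>
      anticomonotone_upper_prod_upper_le_measure hπ ((isUpperSet_Ioi a).preimage hp.neg)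
        ((isUpperSet_Ioi b).preimage hq.neg)

lemma integral_mul_le_integral_anticomonotone (hπ : π ∈ Couplings μ ν) (hp : Antitone p)
    (hq : Monotone q) (hintπ : Integrable (fun z => p z.1 * q z.2) π)
    (hint : Integrable (fun z => p z.1 * q z.2) (anticomonotone μ ν)) :
    ∫ z, p z.1 * q z.2 ∂π ≤ ∫ z, p z.1 * q z.2 ∂anticomonotone μ ν := by
  rw [integral_eq_lintegral_pos_part_sub_lintegral_neg_part hintπ,
    integral_eq_lintegral_pos_part_sub_lintegral_neg_part hint]
  refine sub_le_sub (ENNReal.toReal_mono hint.lintegral_lt_top.ne ?_)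
    (ENNReal.toReal_mono hintπ.neg.lintegral_lt_top.ne ?_)
  · exact lintegral_ofReal_mul_le_lintegral_anticomonotone hπ hp hq
  · simpa only [mul_neg] using lintegral_anticomonotone_ofReal_mul_le hπ hp hq.neg

end MonotoneProducts

/-! ### Interval integrals as superpositions of steps -/

section SignedStep

variable {a y : ℝ} {h : ℝ → ℝ}

/-- The step function `y ↦ 𝟙[s ≤ y]`, shifted to vanish at `a`. As a function of `s` it is the
kernel of the oriented integral from `a` to `y`; as a function of `y` it is monotone. -/
def signedStep (a s y : ℝ) : ℝ := (Ici s).indicator 1 y - (Ici s).indicator 1 a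

lemma signedStep_eq_indicator_uIoc (a s y : ℝ) :
    signedStep a s y = (uIoc a y).indicator (fun _ => if a ≤ y then 1 else -1) s := by
  rcases le_total a y with hay | hay <;>
    simp only [signedStep, uIoc_of_le hay, uIoc_of_ge hay, indicator_apply, mem_Ici, mem_Ioc,
      Pi.one_apply] <;>
    grind

lemma monotone_signedStep (a s : ℝ) : Monotone (signedStep a s) := by
  intro x y hxy
  simp only [signedStep, indicator_apply, mem_Ici, Pi.one_apply]
  grind

lemma measurable_signedStep (a : ℝ) : Measurable fun w : ℝ × ℝ => signedStep a w.2 w.1 := by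
  simp only [signedStep, indicator_apply, mem_Ici]
  exact (Measurable.ite (measurableSet_le measurable_snd measurable_fst) measurable_const
    measurable_const).sub (Measurable.ite (measurableSet_le measurable_snd measurable_const)
    measurable_const measurable_const)

lemma intervalIntegral_eq_integral_mul_signedStep (h : ℝ → ℝ) (a y : ℝ) :
    ∫ s in a..y, h s = ∫ s, h s * signedStep a s y := by
  simp only [signedStep_eq_indicator_uIoc, ← indicator_mul_right]
  rw [integral_indicator measurableSet_uIoc, integral_mul_const,
    intervalIntegral.intervalIntegral_eq_integral_uIoc, smul_eq_mul, mul_comm]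

lemma integrable_mul_signedStep (hh : IntervalIntegrable h volume a y) :
    Integrable fun s => h s * signedStep a s y := by
  simp only [signedStep_eq_indicator_uIoc, ← indicator_mul_right]
  exact (integrable_indicator_iff measurableSet_uIoc).2 (hh.def'.mul_const _)

lemma integral_abs_mul_signedStep (hh : (∀ s, 0 ≤ h s) ∨ ∀ s, h s ≤ 0) :
    ∫ s, |h s * signedStep a s y| = |∫ s in a..y, h s| := by
  have habs (s : ℝ) : |h s * signedStep a s y| = (uIoc a y).indicator (fun s => |h s|) s := by
    rw [signedStep_eq_indicator_uIoc]
    by_cases hs : s ∈ uIoc a y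
    · rw [indicator_of_mem hs, indicator_of_mem hs]
      split_ifs <;> simp
    · rw [indicator_of_notMem hs, indicator_of_notMem hs, mul_zero, abs_zero]
  simp only [habs]
  rw [integral_indicator measurableSet_uIoc, intervalIntegral.abs_intervalIntegral_eq]
  rcases hh with hh | hh
  · have hintegral : 0 ≤ ∫ s in uIoc a y, h s := integral_nonneg hh
    simp only [abs_of_nonneg (hh _), abs_of_nonneg hintegral]
  · have hintegral : ∫ s in uIoc a y, h s ≤ 0 := integral_nonpos hh
    simp only [abs_of_nonpos (hh _), abs_of_nonpos hintegral, integral_neg]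

end SignedStep

/-! ### Convex costs -/

section Convex

variable {θ R : ℝ → ℝ}

lemma exists_monotone_intervalIntegral_eq_sub (hθ : ConvexOn ℝ univ θ) :
    ∃ R : ℝ → ℝ, Monotone R ∧ ∀ a b, ∫ s in a..b, R s = θ b - θ a := by
  have hmono : Monotone fun x => derivWithin θ (Ioi x) x := by
    simpa only [interior_univ, monotoneOn_univ] using hθ.monotoneOn_rightDeriv
  refine ⟨_, hmono, fun a b => ?_⟩
  exact intervalIntegral.integral_eq_sub_of_hasDeriv_right
    ((hθ.continuousOn isOpen_univ).mono (subset_univ _))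
    (fun x _ => hθ.hasDerivWithinAt_rightDeriv_of_mem_interior (by simp))
    hmono.intervalIntegrable

lemma mixedDifference_sub_eq_intervalIntegral (hR : Monotone R)
    (hRθ : ∀ a b, ∫ s in a..b, R s = θ b - θ a) (x₀ y₀ x y : ℝ) :
    mixedDifference (fun x y => θ (y - x)) x₀ y₀ x y =
      ∫ s in y₀..y, (R (s - x) - R (s - x₀)) := by
  have hint (t : ℝ) : IntervalIntegrable (fun s => R (s - t)) volume y₀ y :=
    Monotone.intervalIntegrable fun _ _ hab => hR (sub_le_sub_right hab t)
  rw [intervalIntegral.integral_sub (hint x) (hint x₀), intervalIntegral.integral_comp_sub_right,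
    intervalIntegral.integral_comp_sub_right, hRθ, hRθ, mixedDifference]

/-- The product of an antitone function of `x` and a monotone function of `y` whose superposition
over `s` is the mixed difference of `(x, y) ↦ θ (y - x)`, where `R` is a derivative of `θ`. -/
def mixedDifferenceKernel (R : ℝ → ℝ) (x₀ y₀ s x y : ℝ) : ℝ :=
  (R (s - x) - R (s - x₀)) * signedStep y₀ s y

lemma measurable_mixedDifferenceKernel (hR : Monotone R) (x₀ y₀ : ℝ) :
    Measurable fun w : (ℝ × ℝ) × ℝ => mixedDifferenceKernel R x₀ y₀ w.2 w.1.1 w.1.2 := by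
  have hRm := hR.measurable
  exact Measurable.mul (by fun_prop)
    ((measurable_signedStep y₀).comp (measurable_fst.snd.prodMk measurable_snd))

lemma integrable_mixedDifferenceKernel_prod {π : Measure (ℝ × ℝ)} [SFinite π] (hR : Monotone R)
    (hRθ : ∀ a b, ∫ s in a..b, R s = θ b - θ a) {x₀ y₀ : ℝ}
    (hint : Integrable (fun z => mixedDifference (fun x y => θ (y - x)) x₀ y₀ z.1 z.2) π) :
    Integrable (fun w : (ℝ × ℝ) × ℝ => mixedDifferenceKernel R x₀ y₀ w.2 w.1.1 w.1.2)
      (π.prod volume) := by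
  have hmeas := measurable_mixedDifferenceKernel hR x₀ y₀
  refine (integrable_prod_iff hmeas.aestronglyMeasurable).2 ⟨ae_of_all _ fun z => ?_, ?_⟩
  · have hRint (t : ℝ) : IntervalIntegrable (fun s => R (s - t)) volume y₀ z.2 :=
      Monotone.intervalIntegrable fun _ _ hab => hR (sub_le_sub_right hab t)
    exact integrable_mul_signedStep ((hRint z.1).sub (hRint x₀))
  · have hsign (x : ℝ) : (∀ s, 0 ≤ R (s - x) - R (s - x₀)) ∨ ∀ s, R (s - x) - R (s - x₀) ≤ 0 :=
      (le_total x x₀).imp (fun hx s => sub_nonneg.2 (hR (by linarith)))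
        fun hx s => sub_nonpos.2 (hR (by linarith))
    refine hint.abs.congr (ae_of_all _ fun z => ?_)
    simp only [mixedDifference_sub_eq_intervalIntegral hR hRθ, mixedDifferenceKernel,
      Real.norm_eq_abs, integral_abs_mul_signedStep (hsign z.1)]

lemma integral_mixedDifference_sub_eq_integral_integral {π : Measure (ℝ × ℝ)} [SFinite π]
    (hR : Monotone R) (hRθ : ∀ a b, ∫ s in a..b, R s = θ b - θ a) {x₀ y₀ : ℝ}
    (hint : Integrable (fun z => mixedDifference (fun x y => θ (y - x)) x₀ y₀ z.1 z.2) π) :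
    ∫ z, mixedDifference (fun x y => θ (y - x)) x₀ y₀ z.1 z.2 ∂π =
      ∫ s, ∫ z, mixedDifferenceKernel R x₀ y₀ s z.1 z.2 ∂π := by
  rw [← integral_integral_swap (integrable_mixedDifferenceKernel_prod hR hRθ hint)]
  simp only [mixedDifference_sub_eq_intervalIntegral hR hRθ,
    intervalIntegral_eq_integral_mul_signedStep, mixedDifferenceKernel]

variable {μ ν : Measure ℝ} [IsProbabilityMeasure μ] [IsProbabilityMeasure ν] {π : Measure (ℝ × ℝ)}

lemma integral_mixedDifference_sub_le_integral_anticomonotone (hπ : π ∈ Couplings μ ν)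
    (hθ : ConvexOn ℝ univ θ) {x₀ y₀ : ℝ}
    (hintπ : Integrable (fun z => mixedDifference (fun x y => θ (y - x)) x₀ y₀ z.1 z.2) π)
    (hint : Integrable (fun z => mixedDifference (fun x y => θ (y - x)) x₀ y₀ z.1 z.2)
      (anticomonotone μ ν)) :
    ∫ z, mixedDifference (fun x y => θ (y - x)) x₀ y₀ z.1 z.2 ∂π ≤
      ∫ z, mixedDifference (fun x y => θ (y - x)) x₀ y₀ z.1 z.2 ∂anticomonotone μ ν := by
  have := isProbabilityMeasure_of_mem_couplings hπ
  have := isProbabilityMeasure_of_mem_couplings (anticomonotone_mem_couplings μ ν)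
  obtain ⟨R, hR, hRθ⟩ := exists_monotone_intervalIntegral_eq_sub hθ
  have hkerπ := integrable_mixedDifferenceKernel_prod hR hRθ hintπ
  have hker := integrable_mixedDifferenceKernel_prod hR hRθ hint
  rw [integral_mixedDifference_sub_eq_integral_integral hR hRθ hintπ,
    integral_mixedDifference_sub_eq_integral_integral hR hRθ hint]
  refine integral_mono_ae hkerπ.integral_prod_right hker.integral_prod_right ?_
  filter_upwards [hkerπ.prod_left_ae, hker.prod_left_ae] with s hsπ hs
  have hantitone : Antitone fun x => R (s - x) - R (s - x₀) := fun x x' hx =>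
    sub_le_sub_right (hR (by linarith)) _
  exact integral_mul_le_integral_anticomonotone hπ hantitone (monotone_signedStep y₀ s) hsπ hs

end Convex

theorem integral_convex_sub_le_integral_anticomonotone {μ ν : Measure ℝ} [IsProbabilityMeasure μ]
    [IsProbabilityMeasure ν] {π : Measure (ℝ × ℝ)} (hπ : π ∈ Couplings μ ν) {θ : ℝ → ℝ}
    (hθ : ConvexOn ℝ univ θ) {x₀ y₀ : ℝ} (hθμ : Integrable (fun x => θ (y₀ - x)) μ)
    (hθν : Integrable (fun y => θ (y - x₀)) ν)
    (hintπ : Integrable (fun z : ℝ × ℝ => θ (z.2 - z.1)) π)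
    (hint : Integrable (fun z : ℝ × ℝ => θ (z.2 - z.1)) (anticomonotone μ ν)) :
    ∫ z : ℝ × ℝ, θ (z.2 - z.1) ∂π ≤ ∫ z : ℝ × ℝ, θ (z.2 - z.1) ∂anticomonotone μ ν := by
  have hρ := anticomonotone_mem_couplings μ ν
  have := isProbabilityMeasure_of_mem_couplings hπ
  have := isProbabilityMeasure_of_mem_couplings hρ
  have hle := integral_mixedDifference_sub_le_integral_anticomonotone hπ hθ
    (integrable_mixedDifference hπ hintπ hθμ hθν) (integrable_mixedDifference hρ hint hθμ hθν)
  rw [integral_mixedDifference hπ hintπ hθμ hθν, integral_mixedDifference hρ hint hθμ hθν] at hle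
  linarith

theorem statement18_general (μ ν : Measure ℝ) [IsProbabilityMeasure μ] [IsProbabilityMeasure ν]
    (θ : ℝ → ℝ) (hθ : ConvexOn ℝ univ θ) (f g : ℝ → ℝ) (hf : Integrable f μ)
    (hg : Integrable g ν) (hdom : ∀ x y : ℝ, |θ (y - x)| ≤ f x + g y) :
    IsGreatest {v : ℝ | ∃ π ∈ Couplings μ ν, v = ∫ z : ℝ × ℝ, θ (z.2 - z.1) ∂π}
      (∫ z : ℝ × ℝ, θ (z.2 - z.1) ∂(anticomonotone μ ν)) := by
  have hρ := anticomonotone_mem_couplings μ ν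
  have hcont : Continuous θ := continuousOn_univ.1 (hθ.continuousOn isOpen_univ)
  have hint {π : Measure (ℝ × ℝ)} (hπ : π ∈ Couplings μ ν) :
      Integrable (fun z : ℝ × ℝ => θ (z.2 - z.1)) π :=
    integrable_of_mem_couplings_of_abs_le_add hπ (c := fun x y => θ (y - x)) (by fun_prop)
      hf hg hdom
  have hθμ : Integrable (fun x => θ (0 - x)) μ :=
    (hf.add (integrable_const (g 0))).mono' (by fun_prop) (ae_of_all _ fun x => hdom x 0)
  have hθν : Integrable (fun y => θ (y - 0)) ν :=
    ((integrable_const (f 0)).add hg).mono' (by fun_prop) (ae_of_all _ fun y => hdom 0 y)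
  refine ⟨⟨_, hρ, rfl⟩, ?_⟩
  rintro _ ⟨π, hπ, rfl⟩
  exact integral_convex_sub_le_integral_anticomonotone hπ hθ hθμ hθν (hint hπ) (hint hρ)

/-- the anticomonotone coupling maximizes `∫ θ(y-x) dπ` over couplings,
for convex `θ`. -/
theorem statement18 (μ ν : Measure ℝ) [IsProbabilityMeasure μ] [IsProbabilityMeasure ν]
    (hμ : FinMom 1 (0 : ℝ) μ) (hν : FinMom 1 (0 : ℝ) ν)
    (θ : ℝ → ℝ) (hθ : ConvexOn ℝ Set.univ θ)
    (f g : ℝ → ℝ) (hf : Integrable f μ) (hg : Integrable g ν)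
    (hdom : ∀ x y : ℝ, |θ (y - x)| ≤ f x + g y) :
    ∫ z : ℝ × ℝ, θ (z.2 - z.1) ∂(anticomonotone μ ν)
      = sSup {v : ℝ | ∃ π ∈ Couplings μ ν, v = ∫ z : ℝ × ℝ, θ (z.2 - z.1) ∂π} :=
  (statement18_general μ ν θ hθ f g hf hg hdom).csSup_eq.symm
end
end
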